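/- arXiv:2106.07494 — 2 statements merged into one kernel-verified Lean document; each statement's English description precedes it below -/
import Mathlib

section
/- For integers n ≥ 1 and 1 ≤ i ≤ n−1, the number of permutations σ of {1,…,n} such that σ fixes a prefix of size i and σ does not fix a prefix of size m for any m with i < m ≤ n−1 equals i!·c_{n−i}. -/
open Nat Finset

/-- The prefix `{1, …, j}` of `{1, …, n}`. We represent `{1, …, n}` by `Fin n`,
an element `x : Fin n` having label `x.val + 1`; so the prefix of size `j` is the
set of elements with label at most `j`. -/
def pref (n j : ℕ) : Finset (Fin n) :=
  Finset.univ.filter (fun x => x.val + 1 ≤ j)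

/-- The segment `{u, …, v}` inside `{1, …, n}` (labels as above). -/
def seg (n u v : ℕ) : Finset (Fin n) :=
  Finset.univ.filter (fun x => u ≤ x.val + 1 ∧ x.val + 1 ≤ v)

/-- A permutation `σ` of `{1, …, n}` fixes a prefix of size `j` if
`σ({1, …, j}) = {1, …, j}`. -/
def FixesPrefix {n : ℕ} (σ : Equiv.Perm (Fin n)) (j : ℕ) : Prop :=
  (pref n j).image σ = pref n j

/-- `c n`: the number of connected permutations of size `n`, i.e. permutations of
`{1, …, n}` fixing no prefix of size `j` for any `1 ≤ j ≤ n - 1`. -/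
noncomputable def c (n : ℕ) : ℕ :=
  Nat.card {σ : Equiv.Perm (Fin n) // ∀ j, 1 ≤ j → j ≤ n - 1 → ¬ FixesPrefix σ j}

/-- `cS n S`: the number of `S`-connected permutations of size `n`, i.e. permutations of
`{1, …, n}` fixing no prefix of size `j` for any `j ∈ S`. -/
noncomputable def cS (n : ℕ) (S : Finset ℕ) : ℕ :=
  Nat.card {σ : Equiv.Perm (Fin n) // ∀ j ∈ S, ¬ FixesPrefix σ j}

/-!
A permutation fixing the prefix of size `i` is uniquely a direct sum `a ⊕ b` of a permutation
`a` of `{1, …, i}` and a permutation `b` of `{1, …, n - i}`. For every `j`, the sum `a ⊕ b`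
fixes the prefix of size `i + j` if and only if `b` fixes the prefix of size `j`, so the
condition on larger prefixes constrains only `b`, which must be connected.
-/

theorem mem_pref {n j : ℕ} {x : Fin n} : x ∈ pref n j ↔ x.val < j := by
  simp only [pref, mem_filter, mem_univ, true_and, Nat.succ_le_iff]

theorem fixesPrefix_iff_forall_lt {n : ℕ} {σ : Equiv.Perm (Fin n)} {j : ℕ} :
    FixesPrefix σ j ↔ ∀ x : Fin n, x.val < j → (σ x).val < j := by
  have image_eq_iff_subset : (pref n j).image σ = pref n j ↔ (pref n j).image σ ⊆ pref n j :=
    ⟨Eq.subset, fun h => eq_of_subset_of_card_le h (card_image_of_injective _ σ.injective).ge⟩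
  rw [FixesPrefix, image_eq_iff_subset, image_subset_iff]
  simp only [mem_pref]

section PermSum

variable {i k : ℕ}

/-- The direct sum of two permutations: `a` acts on the first `i` labels and `b`, shifted
by `i`, on the remaining `k`. -/
def permSum (a : Equiv.Perm (Fin i)) (b : Equiv.Perm (Fin k)) : Equiv.Perm (Fin (i + k)) :=
  finSumFinEquiv.permCongr (Equiv.Perm.sumCongr a b)

theorem permSum_castAdd (a : Equiv.Perm (Fin i)) (b : Equiv.Perm (Fin k)) (x : Fin i) :
    permSum a b (Fin.castAdd k x) = Fin.castAdd k (a x) := by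
  simp [permSum, Equiv.permCongr_apply]

theorem permSum_natAdd (a : Equiv.Perm (Fin i)) (b : Equiv.Perm (Fin k)) (x : Fin k) :
    permSum a b (Fin.natAdd i x) = Fin.natAdd i (b x) := by
  simp [permSum, Equiv.permCongr_apply]

theorem fixesPrefix_permSum_left (a : Equiv.Perm (Fin i)) (b : Equiv.Perm (Fin k)) :
    FixesPrefix (permSum a b) i := by
  refine fixesPrefix_iff_forall_lt.2 fun x hx => ?_
  rw [← Fin.castAdd_castLT k x hx, permSum_castAdd]
  exact (a _).isLt

theorem fixesPrefix_permSum_add_iff {a : Equiv.Perm (Fin i)} {b : Equiv.Perm (Fin k)} {j : ℕ} :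
    FixesPrefix (permSum a b) (i + j) ↔ FixesPrefix b j := by
  have left_lt (x : Fin i) : x.val < i + j := Nat.lt_add_right j x.isLt
  simp only [fixesPrefix_iff_forall_lt, Fin.forall_fin_add, permSum_castAdd, permSum_natAdd,
    Fin.val_castAdd, Fin.val_natAdd, Nat.add_lt_add_iff_left, left_lt, implies_true, true_and]

theorem permSum_injective2 :
    Function.Injective2
      (permSum : Equiv.Perm (Fin i) → Equiv.Perm (Fin k) → Equiv.Perm (Fin (i + k))) := by
  intro a a' b b' h
  have sumCongr_eq : Equiv.Perm.sumCongr a b = Equiv.Perm.sumCongr a' b' :=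
    finSumFinEquiv.permCongr.injective h
  exact Prod.mk.inj
    (Equiv.Perm.sumCongrHom_injective (a₁ := (a, b)) (a₂ := (a', b')) sumCongr_eq)

theorem FixesPrefix.exists_permSum_eq {σ : Equiv.Perm (Fin (i + k))} (hσ : FixesPrefix σ i) :
    ∃ a b, permSum a b = σ := by
  have mapsTo_inl : Set.MapsTo (finSumFinEquiv.symm.permCongr σ)
      (Set.range (Sum.inl : Fin i → Fin i ⊕ Fin k)) (Set.range Sum.inl) := by
    rintro _ ⟨x, rfl⟩
    have σ_lt : (σ (Fin.castAdd k x)).val < i := fixesPrefix_iff_forall_lt.1 hσ _ x.isLt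
    refine ⟨(σ (Fin.castAdd k x)).castLT σ_lt, finSumFinEquiv.injective ?_⟩
    simp [Equiv.permCongr_apply]
  obtain ⟨⟨a, b⟩, sumCongr_eq⟩ :=
    Equiv.Perm.mem_sumCongrHom_range_of_perm_mapsTo_inl mapsTo_inl
  exact ⟨a, b, finSumFinEquiv.permCongr.eq_symm_apply.1 sumCongr_eq⟩

/-- The decomposition of a permutation of `{1, …, i + k}` fixing the prefix of size `i` as a
direct sum. -/
noncomputable def permSumEquiv (i k : ℕ) :
    Equiv.Perm (Fin i) × Equiv.Perm (Fin k) ≃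
      {σ : Equiv.Perm (Fin (i + k)) // FixesPrefix σ i} :=
  Equiv.ofBijective (fun p => ⟨permSum p.1 p.2, fixesPrefix_permSum_left p.1 p.2⟩)
    ⟨fun _ _ h => permSum_injective2.uncurry (Subtype.ext_iff.1 h), fun ⟨_, hσ⟩ =>
      let ⟨a, b, h⟩ := hσ.exists_permSum_eq
      ⟨(a, b), Subtype.ext h⟩⟩

end PermSum

theorem card_fixesPrefix_and_forall_not_fixesPrefix_add (i k : ℕ) (S : Finset ℕ) :
    Nat.card {σ : Equiv.Perm (Fin (i + k)) //
      FixesPrefix σ i ∧ ∀ j ∈ S, ¬ FixesPrefix σ (i + j)} = i ! * cS k S :=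
  calc
    _ = Nat.card {σ : {σ : Equiv.Perm (Fin (i + k)) // FixesPrefix σ i} //
          ∀ j ∈ S, ¬ FixesPrefix σ.1 (i + j)} :=
      Nat.card_congr (Equiv.subtypeSubtypeEquivSubtypeInter _
        fun σ : Equiv.Perm (Fin (i + k)) => ∀ j ∈ S, ¬ FixesPrefix σ (i + j)).symm
    _ = Nat.card {p : Equiv.Perm (Fin i) × Equiv.Perm (Fin k) //
          ∀ j ∈ S, ¬ FixesPrefix p.2 j} :=
      Nat.card_congr ((permSumEquiv i k).subtypeEquiv fun _ =>
        forall₂_congr fun _ _ => not_congr fixesPrefix_permSum_add_iff.symm).symm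
    _ = Nat.card ({b : Equiv.Perm (Fin k) // ∀ j ∈ S, ¬ FixesPrefix b j} ×
          Equiv.Perm (Fin i)) :=
      Nat.card_congr (((Equiv.prodComm _ _).subtypeEquiv fun _ => Iff.rfl).trans
        (Equiv.prodSubtypeFstEquivSubtypeProd (p := fun b => ∀ j ∈ S, ¬ FixesPrefix b j)))
    _ = i ! * cS k S := by
      rw [Nat.card_prod, Nat.card_perm, Nat.card_fin, cS, mul_comm]

theorem c_eq_cS_Icc (n : ℕ) : c n = cS n (Icc 1 (n - 1)) := by
  simp only [c, cS, mem_Icc, and_imp]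

/-- For integers `n ≥ 1` and `1 ≤ i ≤ n−1`, the number of permutations `σ` of `{1,…,n}`
such that `σ` fixes a prefix of size `i` and `σ` does not fix a prefix of size `m` for any
`m` with `i < m ≤ n−1` equals `i!·c_{n−i}`. -/
theorem count_fix_prefix_exactly (n i : ℕ) (hn : 1 ≤ n) (hi : 1 ≤ i) (hin : i ≤ n - 1) :
    Nat.card {σ : Equiv.Perm (Fin n) //
      FixesPrefix σ i ∧ ∀ m, i < m → m ≤ n - 1 → ¬ FixesPrefix σ m}
    = i ! * c (n - i) := by
  obtain ⟨k, rfl⟩ : ∃ k, n = i + k := Nat.exists_eq_add_of_le (by omega)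
  have shift_sizes (σ : Equiv.Perm (Fin (i + k))) :
      (∀ m, i < m → m ≤ i + k - 1 → ¬ FixesPrefix σ m) ↔
        ∀ j ∈ Icc 1 (k - 1), ¬ FixesPrefix σ (i + j) := by
    refine ⟨fun h j hj => ?_, fun h m him hmk => ?_⟩
    · rw [mem_Icc] at hj
      exact h (i + j) (by omega) (by omega)
    · obtain ⟨j, rfl⟩ := Nat.exists_eq_add_of_lt him
      exact h (j + 1) (mem_Icc.2 (by omega))
  simp only [shift_sizes]
  rw [card_fixesPrefix_and_forall_not_fixesPrefix_add, Nat.add_sub_cancel_left, c_eq_cS_Icc]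
end

section
/- Let k and i be integers with 1 < i < k. The number of permutations σ of {1,…,k} such that σ(i) = 1 and σ fixes no prefix of size j for any 1 ≤ j ≤ k−1 equals c_{k−1}^{{i−1,…,k−2}}. -/
open Nat Finset

/-!
Deleting the value `1` from a permutation `σ` with `σ(i) = 1` gives a bijection onto all
permutations of size `k - 1`. A prefix of size `1 ≤ j < i` is never fixed by `σ`, since it contains
`1` but not its preimage `i`; a prefix of size `j + 1 ≥ i` is fixed by `σ` exactly when the prefix
of size `j` is fixed after the deletion. So only the conditions with `i - 1 ≤ j ≤ k - 2` survive.
-/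

lemma forall_one_le_le_iff_forall_mem_range_succ {P : ℕ → Prop} {m : ℕ} :
    (∀ j, 1 ≤ j → j ≤ m → P j) ↔ ∀ j ∈ Finset.range m, P (j + 1) := by
  refine ⟨fun h j hj ↦ h (j + 1) (by omega) (Finset.mem_range.1 hj), fun h j hj hjm ↦ ?_⟩
  simpa only [Nat.sub_add_cancel hj] using h (j - 1) (Finset.mem_range.2 (by omega))

lemma fixesPrefix_iff_forall_lt_iff_lt {n : ℕ} (σ : Equiv.Perm (Fin n)) (j : ℕ) :
    FixesPrefix σ j ↔ ∀ x, (σ x).val < j ↔ x.val < j := by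
  rw [FixesPrefix, Finset.ext_iff, σ.surjective.forall]
  refine forall_congr' fun x ↦ ?_
  simp only [σ.injective.mem_finset_image, pref, Finset.mem_filter_univ, Nat.succ_le_iff]
  exact iff_comm

lemma not_fixesPrefix_of_apply_lt_of_le {n j : ℕ} {σ : Equiv.Perm (Fin n)} {x : Fin n}
    (hσx : (σ x).val < j) (hx : j ≤ x.val) : ¬ FixesPrefix σ j := fun h ↦
  hx.not_gt (((fixesPrefix_iff_forall_lt_iff_lt σ j).1 h x).1 hσx)

lemma val_succAbove_lt_succ_iff {m j : ℕ} {p : Fin (m + 1)} (hp : p.val ≤ j) (x : Fin m) :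
    (p.succAbove x).val < j + 1 ↔ x.val < j := by
  rcases lt_or_ge x.castSucc p with h | h
  · have hxj : x.val < j := lt_of_lt_of_le h hp
    simp [Fin.succAbove_of_castSucc_lt _ _ h, hxj, hxj.trans (Nat.lt_succ_self j)]
  · simp [Fin.succAbove_of_le_castSucc _ _ h]

/-- The bijection inserting the value `q` at position `p` of a permutation `τ` of `Fin m`: in
one-line notation, the values of `τ` that are at least `q` are first raised by one. Its inverse
deletes the value `q` at position `p`. -/
def insertEquiv {m : ℕ} (p q : Fin (m + 1)) :
    Equiv.Perm (Fin m) ≃ {σ : Equiv.Perm (Fin (m + 1)) // σ p = q} :=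
  ((Equiv.refl _).equivCongr (finSuccAboveEquiv q)).trans <|
    (Equiv.optionSubtype q).symm.trans <|
      ((finSuccEquiv' p).symm.equivCongr (Equiv.refl _)).subtypeEquiv fun e ↦ by simp

lemma insertEquiv_apply_succAbove {m : ℕ} (p q : Fin (m + 1)) (τ : Equiv.Perm (Fin m))
    (x : Fin m) : (insertEquiv p q τ).1 (p.succAbove x) = q.succAbove (τ x) := by
  simp [insertEquiv, finSuccAboveEquiv_apply]

lemma fixesPrefix_insertEquiv_succ_iff {m j : ℕ} {p q : Fin (m + 1)} (hp : p.val ≤ j)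
    (hq : q.val ≤ j) (τ : Equiv.Perm (Fin m)) :
    FixesPrefix (insertEquiv p q τ).1 (j + 1) ↔ FixesPrefix τ j := by
  simp only [fixesPrefix_iff_forall_lt_iff_lt, Fin.forall_iff_succAbove p,
    (insertEquiv p q τ).2, insertEquiv_apply_succAbove, val_succAbove_lt_succ_iff hp,
    val_succAbove_lt_succ_iff hq, Nat.lt_succ_of_le hp, Nat.lt_succ_of_le hq, true_and]

lemma forall_not_fixesPrefix_insertEquiv_succ_iff {m : ℕ} (p : Fin (m + 1)) {q : Fin (m + 1)}
    {T : Finset ℕ} (hq : ∀ j ∈ T, q.val ≤ j) (τ : Equiv.Perm (Fin m)) :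
    (∀ j ∈ T, ¬ FixesPrefix (insertEquiv p q τ).1 (j + 1)) ↔
      ∀ j ∈ T.filter (p.val ≤ ·), ¬ FixesPrefix τ j := by
  simp only [Finset.mem_filter, and_imp]
  refine forall₂_congr fun j hj ↦ ?_
  rcases le_or_gt p.val j with hp | hp
  · simp only [hp, fixesPrefix_insertEquiv_succ_iff hp (hq j hj), forall_const]
  · have hlt : ((insertEquiv p q τ).1 p).val < j + 1 :=
      (insertEquiv p q τ).2.symm ▸ Nat.lt_succ_of_le (hq j hj)
    simp only [hp.not_ge, not_fixesPrefix_of_apply_lt_of_le hlt hp, not_false_eq_true,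
      false_imp_iff]

theorem count_i_to_one_general {m : ℕ} (p q : Fin (m + 1)) (T : Finset ℕ)
    (hq : ∀ j ∈ T, q.val ≤ j) :
    Nat.card {σ : Equiv.Perm (Fin (m + 1)) // σ p = q ∧ ∀ j ∈ T, ¬ FixesPrefix σ (j + 1)}
      = cS m (T.filter (p.val ≤ ·)) :=
  Nat.card_congr <| Equiv.symm <|
    ((insertEquiv p q).subtypeEquiv fun τ ↦
      (forall_not_fixesPrefix_insertEquiv_succ_iff p hq τ).symm).trans <|
    Equiv.subtypeSubtypeEquivSubtypeInter (· p = q) fun σ ↦ ∀ j ∈ T, ¬ FixesPrefix σ (j + 1)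

/-- For `1 < i < k`, the number of permutations `σ` of `{1,…,k}` such that `σ(i) = 1` and
`σ` fixes no prefix of size `j` for any `1 ≤ j ≤ k−1` equals `c_{k−1}^{{i−1,…,k−2}}`.
(Labels: the element of `Fin k` with value `v` has label `v + 1`.) -/
theorem count_i_to_one (k i : ℕ) (h1 : 1 < i) (h2 : i < k) :
    Nat.card {σ : Equiv.Perm (Fin k) //
      σ ⟨i - 1, by omega⟩ = ⟨0, by omega⟩ ∧
      ∀ j, 1 ≤ j → j ≤ k - 1 → ¬ FixesPrefix σ j}
    = cS (k - 1) (Finset.Icc (i - 1) (k - 2)) := by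
  obtain ⟨m, rfl⟩ : ∃ m, k = m + 1 := ⟨k - 1, by omega⟩
  have hS : Finset.Icc (i - 1) (m + 1 - 2) = (Finset.range m).filter (i - 1 ≤ ·) := by grind
  simpa only [hS, Nat.add_sub_cancel, forall_one_le_le_iff_forall_mem_range_succ] using!
    count_i_to_one_general ⟨i - 1, by omega⟩ 0 (Finset.range m) fun _ _ ↦ Nat.zero_le _
end
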